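/- Let J, v : ℝ × ℝ³ → ℝ³ be twice continuously differentiable and suppose the components of J satisfy the toy-system evolution equation ∂_t J_k + ∂_k(Σ_m v_m J_m) + Σ_m v_m C_mk = 0 for k = 1,2,3, where C_mk := ∂_m J_k − ∂_k J_m is the curl-involution tensor. Then for all indices m, k ∈ {1,2,3} and at every point, C_mk satisfies the linear transport-form evolution ∂_t C_mk + ∂_m(Σ_l v_l C_lk) − ∂_k(Σ_l v_l C_lm) = 0. In particular, the antisymmetric constraint tensor C evolves by a closed linear system, so the vanishing of C is an involution of the toy system. -/

import Mathlib

/-- Time partial derivative of a field on ℝ × ℝ³. -/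
noncomputable def pt4 (f : ℝ → ℝ → ℝ → ℝ → ℝ) (t x y z : ℝ) : ℝ :=
  deriv (fun t' => f t' x y z) t

/-- Spatial partial derivative ∂_k (k-th coordinate direction of ℝ³). -/
noncomputable def pd3 (k : Fin 3) (f : ℝ → ℝ → ℝ → ℝ → ℝ) (t x y z : ℝ) : ℝ :=
  if k = 0 then deriv (fun x' => f t x' y z) x
  else if k = 1 then deriv (fun y' => f t x y' z) y
  else deriv (fun z' => f t x y z') z

/-!
Write `d` for the spatial exterior derivative, so that `C = dJ` for the `1`-form `J`. The evolution
equation reads `∂ₜJ + ι_v dJ = -dχ` with `χ = ∑ v_m J_m`. Applying `d` kills the right-hand side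
and, since `d` commutes with `∂ₜ`, leaves `∂ₜC + d(ι_v C) = 0`. For `d² χ = 0` it is enough that
`χ` is differentiable with differentiable partial derivatives, and the evolution equation itself
provides the latter.
-/

section LineDeriv

variable {𝕜 E F : Type*} [NontriviallyNormedField 𝕜] [NormedAddCommGroup F] [NormedSpace 𝕜 F]

theorem lineDeriv_fun_neg [AddCommGroup E] [Module 𝕜 E] (f : E → F) (p u : E) :
    lineDeriv 𝕜 (fun q => -f q) p u = -lineDeriv 𝕜 f p u :=
  deriv.fun_neg

theorem lineDeriv_fun_add [AddCommGroup E] [Module 𝕜 E] {f g : E → F} {p u : E}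
    (hf : LineDifferentiableAt 𝕜 f p u) (hg : LineDifferentiableAt 𝕜 g p u) :
    lineDeriv 𝕜 (fun q => f q + g q) p u = lineDeriv 𝕜 f p u + lineDeriv 𝕜 g p u :=
  deriv_fun_add hf hg

theorem lineDeriv_fun_sub [AddCommGroup E] [Module 𝕜 E] {f g : E → F} {p u : E}
    (hf : LineDifferentiableAt 𝕜 f p u) (hg : LineDifferentiableAt 𝕜 g p u) :
    lineDeriv 𝕜 (fun q => f q - g q) p u = lineDeriv 𝕜 f p u - lineDeriv 𝕜 g p u :=
  deriv_fun_sub hf hg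

theorem differentiable_lineDeriv [NormedAddCommGroup E] [NormedSpace 𝕜 E] {f : E → F}
    (hf : Differentiable 𝕜 f) (hf' : Differentiable 𝕜 (fderiv 𝕜 f)) (u : E) :
    Differentiable 𝕜 (fun q => lineDeriv 𝕜 f q u) := by
  rw [funext fun q => (hf q).lineDeriv_eq_fderiv]
  exact hf'.clm_apply (differentiable_const u)

/- Although `f` may not be twice differentiable at `p`, its restriction to the plane through `p`
spanned by `u` and `w` is, and Schwarz's theorem is applied there. -/
theorem lineDeriv_lineDeriv_comm [IsRCLikeNormedField 𝕜] [NormedAddCommGroup E] [NormedSpace 𝕜 E]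
    {f : E → F} {p u w : E} (hf : Differentiable 𝕜 f)
    (hu : DifferentiableAt 𝕜 (fun q => lineDeriv 𝕜 f q u) p)
    (hw : DifferentiableAt 𝕜 (fun q => lineDeriv 𝕜 f q w) p) :
    lineDeriv 𝕜 (fun q => lineDeriv 𝕜 f q u) p w =
      lineDeriv 𝕜 (fun q => lineDeriv 𝕜 f q w) p u := by
  let fst := ContinuousLinearMap.fst 𝕜 𝕜 𝕜
  let snd := ContinuousLinearMap.snd 𝕜 𝕜 𝕜
  let L : 𝕜 × 𝕜 →L[𝕜] E := fst.smulRight u + snd.smulRight w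
  have hL (x : 𝕜 × 𝕜) : HasFDerivAt (fun x => p + L x) L x := L.hasFDerivAt.const_add p
  have hplane (x : 𝕜 × 𝕜) : HasFDerivAt (fun x => f (p + L x))
      (fst.smulRight (lineDeriv 𝕜 f (p + L x) u) + snd.smulRight (lineDeriv 𝕜 f (p + L x) w)) x :=
    ((hf (p + L x)).hasFDerivAt.comp x (hL x)).congr_fderiv <| by
      ext <;> simp [L, fst, snd, (hf _).lineDeriv_eq_fderiv]
  have hpartial {g : E → F} (hg : DifferentiableAt 𝕜 g p) :
      HasFDerivAt (fun x => g (p + L x)) ((fderiv 𝕜 g p).comp L) 0 :=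
    HasFDerivAt.comp 0 (by simpa using hg.hasFDerivAt) (hL 0)
  have hsecond :=
    ((ContinuousLinearMap.smulRightL 𝕜 (𝕜 × 𝕜) F fst).hasFDerivAt.comp 0 (hpartial hu)).add
      ((ContinuousLinearMap.smulRightL 𝕜 (𝕜 × 𝕜) F snd).hasFDerivAt.comp 0 (hpartial hw))
  simpa [L, fst, snd, hu.lineDeriv_eq_fderiv, hw.lineDeriv_eq_fderiv] using
    second_derivative_symmetric hplane hsecond (0, 1) (1, 0)

end LineDeriv

section CurlTensor

variable {𝕜 E F ι : Type*} [NontriviallyNormedField 𝕜] [NormedAddCommGroup E] [NormedSpace 𝕜 E]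
  [NormedAddCommGroup F] [NormedSpace 𝕜 F]

variable (𝕜) in
/-- The curl tensor `C_mk = ∂_m J_k - ∂_k J_m` of a family of fields `J`, where `∂_i` is the
derivative in the constant direction `e i`. The directions need not span the space, so that `E` may
be a space-time and `e` its spatial directions. -/
noncomputable def curlTensor (e : ι → E) (J : ι → E → F) (m k : ι) (p : E) : F :=
  lineDeriv 𝕜 (J k) p (e m) - lineDeriv 𝕜 (J m) p (e k)

theorem curlTensor_add {e : ι → E} {A B : ι → E → F} {p : E}
    (hA : ∀ i, DifferentiableAt 𝕜 (A i) p) (hB : ∀ i, DifferentiableAt 𝕜 (B i) p) (m k : ι) :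
    curlTensor 𝕜 e (fun i q => A i q + B i q) m k p =
      curlTensor 𝕜 e A m k p + curlTensor 𝕜 e B m k p := by
  simp only [curlTensor, lineDeriv_fun_add (hA _).lineDifferentiableAt (hB _).lineDifferentiableAt]
  abel

theorem differentiable_curlTensor {e : ι → E} {J : ι → E → F} (hJ : ∀ i, Differentiable 𝕜 (J i))
    (hJ' : ∀ i, Differentiable 𝕜 (fderiv 𝕜 (J i))) (m k : ι) :
    Differentiable 𝕜 (curlTensor 𝕜 e J m k) :=
  (differentiable_lineDeriv (hJ k) (hJ' k) (e m)).sub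
    (differentiable_lineDeriv (hJ m) (hJ' m) (e k))

variable [IsRCLikeNormedField 𝕜]

theorem curlTensor_gradient_eq_zero {e : ι → E} {χ : E → F} {p : E} (hχ : Differentiable 𝕜 χ)
    (hχ' : ∀ i, DifferentiableAt 𝕜 (fun q => lineDeriv 𝕜 χ q (e i)) p) (m k : ι) :
    curlTensor 𝕜 e (fun i q => lineDeriv 𝕜 χ q (e i)) m k p = 0 :=
  sub_eq_zero.mpr (lineDeriv_lineDeriv_comm hχ (hχ' k) (hχ' m))

theorem lineDeriv_curlTensor {e : ι → E} {J : ι → E → F} (hJ : ∀ i, Differentiable 𝕜 (J i))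
    (hJ' : ∀ i, Differentiable 𝕜 (fderiv 𝕜 (J i))) (m k : ι) (p τ : E) :
    lineDeriv 𝕜 (curlTensor 𝕜 e J m k) p τ =
      curlTensor 𝕜 e (fun i q => lineDeriv 𝕜 (J i) q τ) m k p := by
  have hdiff (i : ι) (u : E) := differentiable_lineDeriv (hJ i) (hJ' i) u p
  have hcomm (i j : ι) := lineDeriv_lineDeriv_comm (hJ i) (hdiff i (e j)) (hdiff i τ)
  unfold curlTensor
  rw [lineDeriv_fun_sub (hdiff k (e m)).lineDifferentiableAt (hdiff m (e k)).lineDifferentiableAt,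
    hcomm, hcomm]

theorem stmt_16_general [Fintype ι] {τ : E} {e : ι → E} {J : ι → E → F} {v : ι → E → 𝕜}
    (hJ : ∀ i, Differentiable 𝕜 (J i)) (hJ' : ∀ i, Differentiable 𝕜 (fderiv 𝕜 (J i)))
    (hv : ∀ i, Differentiable 𝕜 (v i))
    (heq : ∀ k p, lineDeriv 𝕜 (J k) p τ + lineDeriv 𝕜 (fun q => ∑ m, v m q • J m q) p (e k) +
      ∑ m, v m p • curlTensor 𝕜 e J m k p = 0) (m k : ι) (p : E) :
    lineDeriv 𝕜 (curlTensor 𝕜 e J m k) p τ +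
      lineDeriv 𝕜 (fun q => ∑ l, v l q • curlTensor 𝕜 e J l k q) p (e m) -
      lineDeriv 𝕜 (fun q => ∑ l, v l q • curlTensor 𝕜 e J l m q) p (e k) = 0 := by
  let χ (q : E) : F := ∑ l, v l q • J l q
  let A (i : ι) (q : E) : F := ∑ l, v l q • curlTensor 𝕜 e J l i q
  have hχ : Differentiable 𝕜 χ := Differentiable.fun_sum fun l _ => (hv l).smul (hJ l)
  have hA (i : ι) : Differentiable 𝕜 (A i) :=
    Differentiable.fun_sum fun l _ => (hv l).smul (differentiable_curlTensor hJ hJ' l i)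
  have hdt (i : ι) : Differentiable 𝕜 (fun q => lineDeriv 𝕜 (J i) q τ) :=
    differentiable_lineDeriv (hJ i) (hJ' i) τ
  have hgrad (i : ι) : (fun q => lineDeriv 𝕜 (fun q => -χ q) q (e i)) =
      fun q => lineDeriv 𝕜 (J i) q τ + A i q := by
    funext q
    rw [lineDeriv_fun_neg, neg_eq_iff_add_eq_zero, ← heq i q]
    abel
  calc
    _ = curlTensor 𝕜 e (fun i q => lineDeriv 𝕜 (J i) q τ) m k p + curlTensor 𝕜 e A m k p := by
      rw [lineDeriv_curlTensor hJ hJ', add_sub_assoc]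
      rfl
    _ = curlTensor 𝕜 e (fun i q => lineDeriv 𝕜 (J i) q τ + A i q) m k p :=
      (curlTensor_add (fun i => hdt i p) (fun i => hA i p) m k).symm
    _ = curlTensor 𝕜 e (fun i q => lineDeriv 𝕜 (fun q => -χ q) q (e i)) m k p := by
      rw [funext hgrad]
    _ = 0 := curlTensor_gradient_eq_zero hχ.neg
      (fun i => hgrad i ▸ (hdt i p).add (hA i p)) m k

end CurlTensor

/-- The three spatial coordinate directions of space-time `ℝ × ℝ³`, encoded as the iterated product
`ℝ × ℝ × ℝ × ℝ` whose first factor is time. -/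
def spatialDirection : Fin 3 → ℝ × ℝ × ℝ × ℝ :=
  ![(0, 1, 0, 0), (0, 0, 1, 0), (0, 0, 0, 1)]

theorem pt4_eq_lineDeriv (f : ℝ → ℝ → ℝ → ℝ → ℝ) (t x y z : ℝ) :
    pt4 f t x y z =
      lineDeriv ℝ (fun p : ℝ × ℝ × ℝ × ℝ => f p.1 p.2.1 p.2.2.1 p.2.2.2) (t, x, y, z)
        (1, 0, 0, 0) := by
  simpa [pt4, lineDeriv] using (deriv_comp_const_add (fun s => f s x y z) t 0).symm

theorem pd3_eq_lineDeriv (k : Fin 3) (f : ℝ → ℝ → ℝ → ℝ → ℝ) (t x y z : ℝ) :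
    pd3 k f t x y z =
      lineDeriv ℝ (fun p : ℝ × ℝ × ℝ × ℝ => f p.1 p.2.1 p.2.2.1 p.2.2.2) (t, x, y, z)
        (spatialDirection k) := by
  fin_cases k
  · simpa [pd3, lineDeriv, spatialDirection] using
      (deriv_comp_const_add (fun s => f t s y z) x 0).symm
  · simpa [pd3, lineDeriv, spatialDirection] using
      (deriv_comp_const_add (fun s => f t x s z) y 0).symm
  · simpa [pd3, lineDeriv, spatialDirection] using
      (deriv_comp_const_add (fun s => f t x y s) z 0).symm

/-- if the C² field J satisfies
∂ₜJ_k + ∂_k(Σ_m v_m J_m) + Σ_m v_m C_mk = 0 with C_mk = ∂_m J_k − ∂_k J_m, then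
the curl-involution tensor C evolves by the closed linear system
∂ₜC_mk + ∂_m(Σ_l v_l C_lk) − ∂_k(Σ_l v_l C_lm) = 0. -/
theorem stmt_16
    (J v : Fin 3 → (ℝ → ℝ → ℝ → ℝ → ℝ))
    (hJ : ∀ i : Fin 3,
      ContDiff ℝ 2 fun p : ℝ × ℝ × ℝ × ℝ => J i p.1 p.2.1 p.2.2.1 p.2.2.2)
    (hv : ∀ i : Fin 3,
      ContDiff ℝ 2 fun p : ℝ × ℝ × ℝ × ℝ => v i p.1 p.2.1 p.2.2.1 p.2.2.2)
    (heq : ∀ k : Fin 3, ∀ t x y z : ℝ,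
      pt4 (J k) t x y z +
        pd3 k (fun t' x' y' z' => ∑ m : Fin 3, v m t' x' y' z' * J m t' x' y' z') t x y z +
        ∑ m : Fin 3, v m t x y z * (pd3 m (J k) t x y z - pd3 k (J m) t x y z) = 0) :
    ∀ m k : Fin 3, ∀ t x y z : ℝ,
      pt4 (fun t' x' y' z' => pd3 m (J k) t' x' y' z' - pd3 k (J m) t' x' y' z') t x y z +
        pd3 m (fun t' x' y' z' => ∑ l : Fin 3,
          v l t' x' y' z' * (pd3 l (J k) t' x' y' z' - pd3 k (J l) t' x' y' z')) t x y z -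
        pd3 k (fun t' x' y' z' => ∑ l : Fin 3,
          v l t' x' y' z' * (pd3 l (J m) t' x' y' z' - pd3 m (J l) t' x' y' z')) t x y z = 0 := by
  simp only [pt4_eq_lineDeriv, pd3_eq_lineDeriv] at heq ⊢
  exact fun m k t x y z => stmt_16_general (fun i => (hJ i).differentiable two_ne_zero)
    (fun i => ((hJ i).fderiv_right one_add_one_eq_two.le).differentiable one_ne_zero)
    (fun i => (hv i).differentiable two_ne_zero)
    (fun k p => heq k p.1 p.2.1 p.2.2.1 p.2.2.2) m k (t, x, y, z)
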